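/- Let α ∈ C_loc^log and q ∈ 𝒫₀^log with 0 < q⁻ ≤ q⁺ < ∞. Fix ε > 0 and suppose that for each dyadic cube Q_{v,m} (v ∈ ℕ₀, m ∈ ℤⁿ) a measurable set E_{Q_{v,m}} ⊆ Q_{v,m} with |E_{Q_{v,m}}| > ε|Q_{v,m}| is given. Then there is a constant c > 0, independent of λ and of the sets E_{Q_{v,m}}, such that for every double sequence of complex numbers λ = {λ_{v,m}}_{v∈ℕ₀,m∈ℤⁿ}: ‖λ‖_{b̃^{α(·),q(·)}_{q(·),q(·)}} ≤ c ‖ x ↦ ( Σ_{v=0}^∞ Σ_{m∈ℤⁿ} 2^{v(α(x)+n/2)q(x)} |λ_{v,m}|^{q(x)} χ_{E_{Q_{v,m}}}(x) )^{1/q(x)} ‖_∞. -/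

import Mathlib

/-!
Fix a finite `M > eNormInf` and put `b_{v,m}(x) = 2^{v(α(x)+n/2)} |λ_{v,m}| / M`. Then
`∑ b_{v,m}(y)^{q(y)} χ_{E_{v,m}}(y) ≤ 1` for almost every `y`; in particular `b_{v,m} ≤ 1` almost
everywhere on `E_{v,m}`.

For `x, y` in one cube `Q_{v,m}`, local log-Hölder continuity bounds both `v |α(x) - α(y)|` and
`v |q(x) - q(y)|` (`mul_abs_sub_le`). Hence `b(x) ≤ A b(y)`, and `b(y)^{q(x)} ≤ C b(y)^{q(y)}` as
long as `b(y) ≥ 2^{-v}`, whereas `b(y)^{q(x)} ≤ 2^{-v q⁻}` if `b(y) < 2^{-v}` (`rpow_exchange`).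
Altogether, with `c = A D^{1/q⁻}` (`tau_compare`),
`(b(x)/c)^{q(x)} ≤ D⁻¹ (C b(y)^{q(y)} + 2^{-v q⁻})`.

Averaging this over `y ∈ E_{v,m}` (`le_average`) and integrating over `x ∈ P` (`cube_estimate`),
the first terms contribute at most `D⁻¹ C ε⁻¹ |P|`: the cubes of generation `v ≥ v_P` meeting `P`
lie in `P`, and `|Q_{v,m}| ≤ ε⁻¹ |E_{v,m}|`. The second terms contribute at most
`D⁻¹ |P| ∑_v 2^{-v q⁻}`. So the modular is at most `1` for `D = C/ε + (1 - 2^{-q⁻})⁻¹`.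
Letting `M` decrease to `eNormInf` also covers the case where the latter vanishes.
-/

noncomputable section
open MeasureTheory ENNReal Set
open scoped ENNReal

abbrev Rn (n : ℕ) := EuclideanSpace ℝ (Fin n)

/-- The dyadic cube `Q_{v,m}` (with `v ∈ ℕ₀`, so `|Q_{v,m}| = 2^{-vn} ≤ 1`). -/
def dyadicCube (n : ℕ) (v : ℕ) (m : Fin n → ℤ) : Set (Rn n) :=
  {x | ∀ i, (m i : ℝ) ≤ 2 ^ v * x i ∧ 2 ^ v * x i < m i + 1}

/-- The variable-exponent modular `ϱ_{p(·)}`. -/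
def modularVE (n : ℕ) (p : Rn n → ℝ) (f : Rn n → ℝ≥0∞) : ℝ≥0∞ :=
  ∫⁻ x, f x ^ p x

/-- The Luxemburg norm `‖·‖_{p(·)}`. -/
def luxNorm (n : ℕ) (p : Rn n → ℝ) (f : Rn n → ℝ≥0∞) : ℝ≥0∞ :=
  sInf {μ : ℝ≥0∞ | 0 < μ ∧ modularVE n p (fun x => f x / μ) ≤ 1}

/-- Local log-Hölder continuity with constant `c`. -/
def LocLogHolderWith (n : ℕ) (c : ℝ) (g : Rn n → ℝ) : Prop :=
  ∀ x y : Rn n, x ≠ y → |g x - g y| ≤ c / Real.log (Real.exp 1 + 1 / ‖x - y‖)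

/-- The log-Hölder decay condition. -/
def LogHolderDecay (n : ℕ) (g : Rn n → ℝ) : Prop :=
  ∃ g_inf c : ℝ, 0 < c ∧ ∀ x : Rn n, |g x - g_inf| ≤ c / Real.log (Real.exp 1 + ‖x‖)

/-- Global log-Hölder continuity. -/
def GlobLogHolder (n : ℕ) (g : Rn n → ℝ) : Prop :=
  (∃ c : ℝ, 0 < c ∧ LocLogHolderWith n c g) ∧ LogHolderDecay n g

/-- The sequence space norm `‖λ‖_{b̃^{β(·),r(·)}_{r(·),r(·)}}`: the supremum over dyadic
cubes `P = Q_{vP,m0}` with `|P| ≤ 1` of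
`‖ x ↦ ( |P|^{-1} Σ_{v≥v_P} Σ_m 2^{v(β(x)+n/2)r(x)} |λ_{v,m}|^{r(x)} χ_{v,m}(x) )^{1/r(x)} χ_P ‖_{r(·)}`;
here `|P|^{-1} = 2^{vP·n}`. -/
def btNorm (n : ℕ) (r β : Rn n → ℝ) (lam : ℕ → (Fin n → ℤ) → ℂ) : ℝ≥0∞ :=
  ⨆ (vP : ℕ) (m0 : Fin n → ℤ),
    luxNorm n r ((dyadicCube n vP m0).indicator fun x =>
      ((2 : ℝ≥0∞) ^ ((vP : ℝ) * n) *
        ∑' (v : ℕ), ∑' (m : Fin n → ℤ),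
          (if vP ≤ v then (1 : ℝ≥0∞) else 0) *
            (2 : ℝ≥0∞) ^ ((v : ℝ) * (β x + n / 2) * r x) *
              ENNReal.ofReal ‖lam v m‖ ^ r x *
                (dyadicCube n v m).indicator (fun _ => (1 : ℝ≥0∞)) x) ^ (1 / r x))

/-- `‖ x ↦ ( Σ_v Σ_m 2^{v(β(x)+n/2)r(x)} |λ_{v,m}|^{r(x)} χ_{E_{Q_{v,m}}}(x) )^{1/r(x)} ‖_∞`. -/
def eNormInf (n : ℕ) (r β : Rn n → ℝ) (lam : ℕ → (Fin n → ℤ) → ℂ)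
    (E : ℕ → (Fin n → ℤ) → Set (Rn n)) : ℝ≥0∞ :=
  essSup (fun x =>
    (∑' (v : ℕ), ∑' (m : Fin n → ℤ),
      (2 : ℝ≥0∞) ^ ((v : ℝ) * (β x + n / 2) * r x) *
        ENNReal.ofReal ‖lam v m‖ ^ r x *
          (E v m).indicator (fun _ => (1 : ℝ≥0∞)) x) ^ (1 / r x))
    (volume : Measure (Rn n))

/-- The rescaled coefficient `(2^{v(α(x)+n/2)} l / M)^{q(x)}`, with `l = |λ_{v,m}|`. -/
def tau (n : ℕ) (q α : Rn n → ℝ) (M l : ℝ) (v : ℕ) (x : Rn n) : ℝ :=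
  ((2 : ℝ) ^ ((v : ℝ) * (α x + n / 2)) * l / M) ^ q x

/-! ### Dyadic cubes -/

lemma measurableSet_dyadicCube (n v : ℕ) (m : Fin n → ℤ) :
    MeasurableSet (dyadicCube n v m) := by
  have : dyadicCube n v m = ⋂ i, {x : Rn n | (m i : ℝ) ≤ 2 ^ v * x i ∧ 2 ^ v * x i < m i + 1} := by
    ext x; simp [dyadicCube]
  rw [this]
  refine MeasurableSet.iInter fun i => ?_
  have hm : Measurable fun x : Rn n => (2 : ℝ) ^ v * x i := by fun_prop
  exact (measurableSet_le measurable_const hm).inter (measurableSet_lt hm measurable_const)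

lemma volume_dyadicCube (n v : ℕ) (m : Fin n → ℤ) :
    volume (dyadicCube n v m) = ((2 : ℝ≥0∞) ^ ((v : ℝ) * n))⁻¹ := by
  have h2 : (0 : ℝ) < 2 ^ v := by positivity
  have h : dyadicCube n v m = (MeasurableEquiv.toLp 2 (Fin n → ℝ)).symm ⁻¹'
      (Set.pi Set.univ fun i => Set.Ico ((m i : ℝ) / 2 ^ v) (((m i : ℝ) + 1) / 2 ^ v)) := by
    ext x
    simp only [dyadicCube, Set.mem_ofPred_eq, Set.mem_preimage, Set.mem_pi, Set.mem_univ,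
      true_implies, Set.mem_Ico]
    refine forall_congr' fun i => ?_
    rw [div_le_iff₀ h2, lt_div_iff₀ h2, mul_comm]
    rfl
  rw [h, (EuclideanSpace.volume_preserving_symm_measurableEquiv_toLp (Fin n)).measure_preimage_equiv,
    Real.volume_pi_Ico]
  have : ∀ i : Fin n, ENNReal.ofReal (((m i : ℝ) + 1) / 2 ^ v - (m i : ℝ) / 2 ^ v)
      = ((2 : ℝ≥0∞) ^ v)⁻¹ := by
    intro i
    rw [← sub_div, add_sub_cancel_left, one_div, ENNReal.ofReal_inv_of_pos h2,
      ENNReal.ofReal_pow (by norm_num)]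
    norm_num
  rw [Finset.prod_congr rfl fun i _ => this i, Finset.prod_const, Finset.card_univ,
    Fintype.card_fin, ← ENNReal.inv_pow, ← pow_mul, ← ENNReal.rpow_natCast]
  push_cast
  rfl

lemma dyadicCube_disjoint (n v : ℕ) :
    Pairwise (Function.onFun Disjoint (dyadicCube n v)) := by
  intro m m' hmm
  refine Set.disjoint_left.2 fun x hx hx' => hmm (funext fun i => ?_)
  have h1 := hx i
  have h2 := hx' i
  have a : (m i : ℝ) < m' i + 1 := by linarith
  have b : (m' i : ℝ) < m i + 1 := by linarith
  norm_cast at a b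
  omega

lemma dyadicCube_nested {n v w : ℕ} (hvw : w ≤ v) {m k : Fin n → ℤ} {x : Rn n}
    (hx : x ∈ dyadicCube n v m) (hx' : x ∈ dyadicCube n w k) :
    dyadicCube n v m ⊆ dyadicCube n w k := by
  obtain ⟨d, rfl⟩ := Nat.exists_eq_add_of_le hvw
  intro y hy i
  obtain ⟨h1, h2⟩ := hx i
  obtain ⟨h3, h4⟩ := hx' i
  obtain ⟨h5, h6⟩ := hy i
  have hd : (0 : ℝ) < 2 ^ d := by positivity
  rw [pow_add] at h1 h2 h5 h6
  have a : (2 ^ d * k i : ℝ) < m i + 1 := by nlinarith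
  have b : (m i : ℝ) < 2 ^ d * (k i + 1) := by nlinarith
  have a' : (2 ^ d * k i : ℤ) < m i + 1 := by exact_mod_cast a
  have b' : (m i : ℤ) < 2 ^ d * (k i + 1) := by exact_mod_cast b
  have a2 : (2 ^ d * k i : ℝ) ≤ m i := by exact_mod_cast Int.lt_add_one_iff.1 a'
  have b2 : (m i : ℝ) + 1 ≤ 2 ^ d * (k i + 1) := by exact_mod_cast b'
  constructor
  · by_contra hc
    push Not at hc
    nlinarith
  · by_contra hc
    push Not at hc
    nlinarith

lemma norm_sub_le_of_mem_dyadicCube {n v : ℕ} {m : Fin n → ℤ} {x y : Rn n}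
    (hx : x ∈ dyadicCube n v m) (hy : y ∈ dyadicCube n v m) :
    ‖x - y‖ ≤ n / 2 ^ v := by
  have h2 : (0 : ℝ) < 2 ^ v := by positivity
  have hi : ∀ i, ‖(x - y) i‖ ≤ 1 / 2 ^ v := by
    intro i
    obtain ⟨h1, h2⟩ := hx i
    obtain ⟨h3, h4⟩ := hy i
    rw [le_div_iff₀ (by positivity), Real.norm_eq_abs, ← abs_of_pos (show (0 : ℝ) < 2 ^ v by positivity),
      ← abs_mul, abs_le, PiLp.sub_apply]
    constructor <;> nlinarith
  rw [EuclideanSpace.norm_eq]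
  refine Real.sqrt_le_iff.2 ⟨by positivity, ?_⟩
  calc ∑ i, ‖(x - y) i‖ ^ 2 ≤ ∑ _i : Fin n, (1 / 2 ^ v : ℝ) ^ 2 :=
        Finset.sum_le_sum fun i _ => pow_le_pow_left₀ (norm_nonneg _) (hi i) 2
    _ = n * (1 / 2 ^ v : ℝ) ^ 2 := by simp
    _ ≤ (n : ℝ) ^ 2 * (1 / 2 ^ v : ℝ) ^ 2 := by
        gcongr
        exact_mod_cast Nat.le_self_pow (by norm_num) n
    _ = _ := by ring

/-! ### Pointwise comparison on a cube -/

/-- On a cube of side `2^{-v}`, a log-Hölder function oscillates by `O(1/v)`. -/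
lemma mul_abs_sub_le {n : ℕ} (hn : 1 ≤ n) {c : ℝ} (hc : 0 < c) {g : Rn n → ℝ}
    (hg : LocLogHolderWith n c g) {v : ℕ} {m : Fin n → ℤ} {x y : Rn n}
    (hx : x ∈ dyadicCube n v m) (hy : y ∈ dyadicCube n v m) :
    (v : ℝ) * |g x - g y| ≤ c * ((1 + Real.log n) / Real.log 2) := by
  have hn' : (1 : ℝ) ≤ n := by exact_mod_cast hn
  have hln : 0 ≤ Real.log n := Real.log_nonneg hn'
  have hl2 : 0 < Real.log 2 := Real.log_pos (by norm_num)
  by_cases hxy : x = y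
  · subst hxy
    simp only [sub_self, abs_zero, mul_zero]
    positivity
  have hpos : 0 < ‖x - y‖ := norm_pos_iff.2 (sub_ne_zero.2 hxy)
  have h2 : (0 : ℝ) < 2 ^ v := by positivity
  have hd := norm_sub_le_of_mem_dyadicCube hx hy
  set L := Real.log (Real.exp 1 + 1 / ‖x - y‖) with hL
  have hexp := Real.exp_pos 1
  have hinv : (2 : ℝ) ^ v / n ≤ 1 / ‖x - y‖ := by
    rw [le_div_iff₀ hpos]
    calc (2 : ℝ) ^ v / n * ‖x - y‖ ≤ 2 ^ v / n * (n / 2 ^ v) := by gcongr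
      _ = 1 := by field_simp
  have hL1 : 1 ≤ L := by
    rw [hL, Real.le_log_iff_exp_le (by positivity)]
    have : 0 < 1 / ‖x - y‖ := by positivity
    linarith
  have hL2 : v * Real.log 2 - Real.log n ≤ L := by
    rw [← Real.log_pow, ← Real.log_div h2.ne' (by positivity)]
    exact Real.log_le_log (by positivity) (by linarith)
  have hvL : (v : ℝ) * Real.log 2 ≤ L * (1 + Real.log n) := by nlinarith
  calc (v : ℝ) * |g x - g y| ≤ v * (c / L) := by
        gcongr
        exact hg x y hxy
    _ = c * (v / L) := by ring
    _ ≤ c * ((1 + Real.log n) / Real.log 2) := by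
        gcongr c * ?_
        rw [div_le_div_iff₀ (by linarith) hl2]
        linarith

/-- Exponents may be exchanged for bases in `[2^{-v}, 1]`; smaller bases produce the summable
error `2^{-v qm}`. -/
lemma rpow_exchange {b r s qm C : ℝ} {v : ℕ} (hb0 : 0 ≤ b) (hb1 : b ≤ 1)
    (hqm : 0 < qm) (hr : qm ≤ r) (hrs : (v : ℝ) * |r - s| ≤ C) :
    b ^ r ≤ 2 ^ C * b ^ s + (2 ^ (-qm)) ^ v := by
  by_cases hb : b < 2 ^ (-(v : ℝ))
  · have h1 : b ^ r ≤ (2 ^ (-qm)) ^ v :=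
      calc b ^ r ≤ b ^ qm := Real.rpow_le_rpow_of_exponent_ge_of_imp hb0 hb1 hr
              (fun _ h => by linarith)
        _ ≤ (2 ^ (-(v : ℝ))) ^ qm := Real.rpow_le_rpow hb0 hb.le hqm.le
        _ = (2 ^ (-qm)) ^ v := by
            rw [← Real.rpow_mul (by norm_num), ← Real.rpow_natCast, ← Real.rpow_mul (by norm_num)]
            congr 1; ring
    have : 0 ≤ (2 : ℝ) ^ C * b ^ s := by positivity
    linarith
  · push Not at hb
    have hbp : 0 < b := lt_of_lt_of_le (by positivity) hb
    have h1 : b ^ (r - s) ≤ 2 ^ C :=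
      calc b ^ (r - s) ≤ b ^ (-|r - s|) :=
            Real.rpow_le_rpow_of_exponent_ge hbp hb1 (neg_abs_le _)
        _ ≤ (2 ^ (-(v : ℝ))) ^ (-|r - s|) :=
            Real.rpow_le_rpow_of_nonpos (by positivity) hb (by simp)
        _ = 2 ^ ((v : ℝ) * |r - s|) := by
            rw [← Real.rpow_mul (by norm_num)]; congr 1; ring
        _ ≤ 2 ^ C := Real.rpow_le_rpow_of_exponent_le (by norm_num) hrs
    have h2 : b ^ r = b ^ (r - s) * b ^ s := by
      rw [← Real.rpow_add hbp]; congr 1; ring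
    have : b ^ (r - s) * b ^ s ≤ 2 ^ C * b ^ s := by gcongr
    have : (0 : ℝ) ≤ (2 ^ (-qm)) ^ v := by positivity
    linarith

/-- The pointwise comparison of two rescaled coefficients on one cube: `a` bounds the oscillation
of `v α` and `C` that of `v q`. -/
lemma tau_compare {n : ℕ} {q α : Rn n → ℝ} {M l qm a C D : ℝ} {v : ℕ} {x y : Rn n}
    (hM : 0 < M) (hl : 0 ≤ l) (hqm : 0 < qm) (hD : 1 ≤ D)
    (hqx : qm ≤ q x) (hqy : qm ≤ q y)
    (hα : (v : ℝ) * |α x - α y| ≤ a) (hq : (v : ℝ) * |q x - q y| ≤ C)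
    (hy : tau n q α M l v y ≤ 1) :
    (2 ^ a * D ^ (1 / qm)) ^ (-q x) * tau n q α M l v x ≤
      D⁻¹ * (2 ^ C * tau n q α M l v y + (2 ^ (-qm)) ^ v) := by
  set b : ℝ := (2 : ℝ) ^ ((v : ℝ) * (α y + n / 2)) * l / M with hb
  have hb0 : 0 ≤ b := by positivity
  have hb1 : b ≤ 1 := by
    by_contra h
    push Not at h
    exact absurd hy (not_le.2 (Real.one_lt_rpow h (by linarith)))
  have hD0 : 0 < D := by linarith
  have hbx : (2 : ℝ) ^ ((v : ℝ) * (α x + n / 2)) * l / M ≤ 2 ^ a * b := by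
    have : (2 : ℝ) ^ ((v : ℝ) * (α x + n / 2)) ≤ 2 ^ a * 2 ^ ((v : ℝ) * (α y + n / 2)) := by
      rw [← Real.rpow_add (by norm_num)]
      refine Real.rpow_le_rpow_of_exponent_le (by norm_num) ?_
      have : (v : ℝ) * (α x - α y) ≤ v * |α x - α y| := by
        gcongr; exact le_abs_self _
      linarith
    calc _ ≤ 2 ^ a * 2 ^ ((v : ℝ) * (α y + n / 2)) * l / M := by gcongr
      _ = _ := by rw [hb]; ring
  have h1 : tau n q α M l v x ≤ (2 ^ a) ^ q x * b ^ q x := by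
    rw [← Real.mul_rpow (by positivity) hb0]
    exact Real.rpow_le_rpow (by positivity) hbx (by linarith)
  have h2 : (D ^ (1 / qm)) ^ (-q x) ≤ D⁻¹ := by
    rw [← Real.rpow_mul hD0.le, ← Real.rpow_neg_one]
    refine Real.rpow_le_rpow_of_exponent_le hD ?_
    rw [one_div, mul_neg, neg_le_neg_iff, inv_mul_eq_div, le_div_iff₀ hqm]
    linarith
  calc (2 ^ a * D ^ (1 / qm)) ^ (-q x) * tau n q α M l v x
      ≤ (2 ^ a * D ^ (1 / qm)) ^ (-q x) * ((2 ^ a) ^ q x * b ^ q x) := by gcongr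
    _ = (D ^ (1 / qm)) ^ (-q x) * b ^ q x := by
        rw [Real.mul_rpow (by positivity) (by positivity), Real.rpow_neg (x := 2 ^ a) (by positivity)]
        have : (0 : ℝ) < (2 ^ a) ^ q x := by positivity
        field_simp
    _ ≤ D⁻¹ * (2 ^ C * b ^ q y + (2 ^ (-qm)) ^ v) := by
        gcongr
        exact rpow_exchange hb0 hb1 hqm hqx hq

/-- Log-Hölder continuity passes from `1/q` to `q` where `q ≤ qM`. -/
lemma mul_abs_exponent_sub_le {r s qM c : ℝ} {v : ℕ} (hr : 0 < r) (hs : 0 < s)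
    (hrM : r ≤ qM) (hsM : s ≤ qM) (h : (v : ℝ) * |1 / r - 1 / s| ≤ c) :
    (v : ℝ) * |r - s| ≤ qM ^ 2 * c := by
  have h1 : |r - s| = r * s * |1 / r - 1 / s| := by
    nth_rewrite 1 [← abs_of_pos (mul_pos hr hs)]
    rw [← abs_mul, abs_sub_comm]
    congr 1
    field_simp
  rw [h1]
  have h0 : 0 ≤ (v : ℝ) * |1 / r - 1 / s| := by positivity
  calc (v : ℝ) * (r * s * |1 / r - 1 / s|) = (r * s) * (v * |1 / r - 1 / s|) := by ring
    _ ≤ (qM * qM) * c := mul_le_mul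
        (mul_le_mul hrM hsM hs.le (hr.le.trans hrM)) h h0 (mul_self_nonneg _)
    _ = _ := by ring

/-! ### Integration -/

/-- Averaging a pointwise comparison over the subset `E` of `Q`. -/
lemma le_average {X : Type*} [MeasurableSpace X] {μ : Measure X} {E : Set X}
    (hE : MeasurableSet E) {ε Q K d e : ℝ≥0∞} (hEQ : ε * Q < μ E) (hEfin : μ E ≠ ∞) {f : X → ℝ≥0∞} (hf : Measurable f)
    (h : ∀ᵐ y ∂μ, y ∈ E → K ≤ d * f y + e) :
    K ≤ d * ((ε * Q)⁻¹ * ∫⁻ y in E, f y ∂μ) + e := by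
  have hE0 : μ E ≠ 0 := (lt_of_le_of_lt zero_le hEQ).ne'
  have h1 : K * μ E ≤ d * (∫⁻ y in E, f y ∂μ) + e * μ E := by
    calc K * μ E = ∫⁻ _ in E, K ∂μ := by simp
      _ ≤ ∫⁻ y in E, (d * f y + e) ∂μ :=
          lintegral_mono_ae ((ae_restrict_iff' hE).2 h)
      _ = _ := by
          rw [lintegral_add_right _ measurable_const, lintegral_const_mul _ hf]
          simp
  calc K = K * μ E * (μ E)⁻¹ := by rw [mul_assoc, ENNReal.mul_inv_cancel hE0 hEfin, mul_one]
    _ ≤ (d * (∫⁻ y in E, f y ∂μ) + e * μ E) * (μ E)⁻¹ := by gcongr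
    _ = d * ((μ E)⁻¹ * ∫⁻ y in E, f y ∂μ) + e := by
        rw [add_mul, mul_assoc e, ENNReal.mul_inv_cancel hE0 hEfin, mul_one]
        ring
    _ ≤ _ := by gcongr

lemma measurable_tau {n : ℕ} {q α : Rn n → ℝ} (hq : Measurable q) (hα : Measurable α)
    (M l : ℝ) (v : ℕ) : Measurable (tau n q α M l v) := by
  unfold tau
  fun_prop

lemma term_eq_tau {n : ℕ} {q α : Rn n → ℝ} {M l : ℝ} (hM : 0 < M) (hl : 0 ≤ l) (v : ℕ)
    (x : Rn n) (hq : 0 < q x) :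
    (2 : ℝ≥0∞) ^ ((v : ℝ) * (α x + n / 2) * q x) * ENNReal.ofReal l ^ q x =
      ENNReal.ofReal M ^ q x * ENNReal.ofReal (tau n q α M l v x) := by
  rw [tau, ← ENNReal.ofReal_rpow_of_nonneg (by positivity) hq.le,
    ← ENNReal.mul_rpow_of_nonneg _ _ hq.le, ← ENNReal.ofReal_mul hM.le,
    mul_div_cancel₀ _ hM.ne', ENNReal.ofReal_mul (by positivity),
    ENNReal.mul_rpow_of_nonneg _ _ hq.le, ENNReal.rpow_mul,
    ← ENNReal.ofReal_rpow_of_pos (by norm_num)]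
  norm_num

/-- The modular estimate over a single cube `P = Q_{w,k}`. Here `K v m x` are the terms on the
cubes `Q_{v,m}` and `T v m` the terms on the subsets `E v m`; `hK` compares them. -/
lemma cube_estimate {n : ℕ} {E : ℕ → (Fin n → ℤ) → Set (Rn n)} {ε : ℝ≥0∞}
    (hε0 : ε ≠ 0) (hε : ε ≠ ∞)
    (hEm : ∀ v m, MeasurableSet (E v m)) (hEs : ∀ v m, E v m ⊆ dyadicCube n v m)
    (hEv : ∀ v m, ε * volume (dyadicCube n v m) < volume (E v m))
    {K T : ℕ → (Fin n → ℤ) → Rn n → ℝ≥0∞} (hT : ∀ v m, Measurable (T v m))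
    (hTsum : ∀ᵐ y ∂(volume : Measure (Rn n)),
      ∑' v, ∑' m, T v m y * (E v m).indicator (fun _ => (1 : ℝ≥0∞)) y ≤ 1)
    {d : ℝ≥0∞} {e : ℕ → ℝ≥0∞}
    (hK : ∀ᵐ x ∂(volume : Measure (Rn n)), ∀ᵐ y ∂(volume : Measure (Rn n)), ∀ v m,
      x ∈ dyadicCube n v m → y ∈ E v m → K v m x ≤ d * T v m y + e v)
    (hde : d * ε⁻¹ + ∑' v, e v ≤ 1) (w : ℕ) (k : Fin n → ℤ) :
    ∫⁻ x in dyadicCube n w k, (2 : ℝ≥0∞) ^ ((w : ℝ) * n) *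
      ∑' v, ∑' m, (if w ≤ v then (1 : ℝ≥0∞) else 0) * K v m x *
        (dyadicCube n v m).indicator (fun _ => (1 : ℝ≥0∞)) x ≤ 1 := by
  set P := dyadicCube n w k with hP
  have hPm : MeasurableSet P := measurableSet_dyadicCube n w k
  have htop : ∀ v : ℕ, (2 : ℝ≥0∞) ^ ((v : ℝ) * n) ≠ ∞ := fun v =>
    ENNReal.rpow_ne_top_of_nonneg (by positivity) (by norm_num)
  have hpos : ∀ v : ℕ, (2 : ℝ≥0∞) ^ ((v : ℝ) * n) ≠ 0 := fun v =>
    (ENNReal.rpow_pos (by norm_num) (by norm_num)).ne'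
  have hQ0 : ∀ v m, volume (dyadicCube n v m) ≠ 0 := fun v m => by
    rw [volume_dyadicCube]; exact ENNReal.inv_ne_zero.2 (htop v)
  have hQt : ∀ v m, volume (dyadicCube n v m) ≠ ∞ := fun v m => by
    rw [volume_dyadicCube]; exact ENNReal.inv_ne_top.2 (hpos v)
  have hEt : ∀ v m, volume (E v m) ≠ ∞ := fun v m =>
    measure_ne_top_of_subset (hEs v m) (hQt v m)
  let I : ℕ → (Fin n → ℤ) → ℝ≥0∞ := fun v m => ∫⁻ y in E v m, T v m y
  let B : ℕ → (Fin n → ℤ) → ℝ≥0∞ := fun v m =>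
    d * ((ε * volume (dyadicCube n v m))⁻¹ * I v m) + e v
  have hKB : ∀ᵐ x ∂(volume : Measure (Rn n)), ∀ v m, x ∈ dyadicCube n v m → K v m x ≤ B v m := by
    filter_upwards [hK] with x hx v m hxQ
    refine le_average (hEm v m) (hEv v m) (hEt v m) (hT v m) ?_
    filter_upwards [hx] with y hy hyE using hy v m hxQ hyE
  -- By nestedness, each cube of generation `v ≥ w` meeting `P` lies inside `P`.
  have hcube : ∀ v m, (if w ≤ v then (1 : ℝ≥0∞) else 0) * B v m * volume (P ∩ dyadicCube n v m) ≤
      d * ε⁻¹ * (∫⁻ y in P, T v m y * (E v m).indicator (fun _ => (1 : ℝ≥0∞)) y) +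
        e v * volume (P ∩ dyadicCube n v m) := by
    intro v m
    by_cases hwv : w ≤ v
    swap
    · simp [hwv]
    rcases Set.eq_empty_or_nonempty (P ∩ dyadicCube n v m) with h0 | ⟨z, hzP, hzQ⟩
    · simp [h0]
    have hsub : dyadicCube n v m ⊆ P := dyadicCube_nested hwv hzQ hzP
    have hI : ∫⁻ y in P, T v m y * (E v m).indicator (fun _ => (1 : ℝ≥0∞)) y = I v m := by
      have : (fun y => T v m y * (E v m).indicator (fun _ => (1 : ℝ≥0∞)) y)
          = (E v m).indicator (T v m) := by
        ext y
        by_cases hy : y ∈ E v m <;> simp [hy]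
      rw [this, setLIntegral_indicator (hEm v m),
        Set.inter_eq_left.2 ((hEs v m).trans hsub)]
    rw [hI, Set.inter_eq_right.2 hsub, if_pos hwv, one_mul, add_mul]
    refine add_le_add_left ?_ _
    rw [ENNReal.mul_inv (Or.inl hε0) (Or.inl hε)]
    calc d * (ε⁻¹ * (volume (dyadicCube n v m))⁻¹ * I v m) * volume (dyadicCube n v m)
        = d * ε⁻¹ * I v m * ((volume (dyadicCube n v m))⁻¹ * volume (dyadicCube n v m)) := by ring
      _ ≤ d * ε⁻¹ * I v m := by
          rw [ENNReal.inv_mul_cancel (hQ0 v m) (hQt v m), mul_one]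
  have hTm : ∀ v m, Measurable
      fun y => T v m y * (E v m).indicator (fun _ => (1 : ℝ≥0∞)) y := fun v m =>
    (hT v m).mul (measurable_const.indicator (hEm v m))
  have hmain : ∑' v, ∑' m, ∫⁻ y in P, T v m y * (E v m).indicator (fun _ => (1 : ℝ≥0∞)) y
      ≤ volume P := by
    calc _ = ∫⁻ y in P, ∑' v, ∑' m, T v m y * (E v m).indicator (fun _ => (1 : ℝ≥0∞)) y := by
          rw [lintegral_tsum fun v => (Measurable.tsum (hTm v)).aemeasurable]
          refine tsum_congr fun v => ?_
          rw [lintegral_tsum fun m => (hTm v m).aemeasurable]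
      _ ≤ ∫⁻ y in P, 1 := lintegral_mono_ae (ae_restrict_of_ae hTsum)
      _ = volume P := by simp
  have herr : ∀ v, ∑' m, volume (P ∩ dyadicCube n v m) ≤ volume P := by
    intro v
    rw [← measure_iUnion (fun m m' h => (dyadicCube_disjoint n v h).mono
      Set.inter_subset_right Set.inter_subset_right)
      fun m => hPm.inter (measurableSet_dyadicCube n v m)]
    exact measure_mono (Set.iUnion_subset fun m => Set.inter_subset_left)
  have hind : ∀ v m, Measurable fun x => (if w ≤ v then (1 : ℝ≥0∞) else 0) * B v m *
      (dyadicCube n v m).indicator (fun _ => (1 : ℝ≥0∞)) x := fun v m =>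
    measurable_const.mul (measurable_const.indicator (measurableSet_dyadicCube n v m))
  calc _ ≤ ∫⁻ x in P, (2 : ℝ≥0∞) ^ ((w : ℝ) * n) *
          ∑' v, ∑' m, (if w ≤ v then (1 : ℝ≥0∞) else 0) * B v m *
            (dyadicCube n v m).indicator (fun _ => (1 : ℝ≥0∞)) x := by
        refine lintegral_mono_ae (ae_restrict_of_ae ?_)
        filter_upwards [hKB] with x hx
        refine mul_le_mul_right (ENNReal.tsum_le_tsum fun v => ENNReal.tsum_le_tsum fun m => ?_) _
        by_cases hxQ : x ∈ dyadicCube n v m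
        · have := hx v m hxQ
          gcongr
        · simp [hxQ]
    _ = (2 : ℝ≥0∞) ^ ((w : ℝ) * n) * ∑' v, ∑' m, (if w ≤ v then (1 : ℝ≥0∞) else 0) * B v m *
          volume (P ∩ dyadicCube n v m) := by
        rw [lintegral_const_mul _ (Measurable.tsum fun v => Measurable.tsum (hind v)),
          lintegral_tsum fun v => (Measurable.tsum (hind v)).aemeasurable]
        congr 1
        refine tsum_congr fun v => ?_
        rw [lintegral_tsum fun m => (hind v m).aemeasurable]
        refine tsum_congr fun m => ?_
        rw [lintegral_const_mul _ (measurable_const.indicator (measurableSet_dyadicCube n v m)),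
          setLIntegral_indicator (measurableSet_dyadicCube n v m), Set.inter_comm]
        simp
    _ ≤ (2 : ℝ≥0∞) ^ ((w : ℝ) * n) * ∑' v, ∑' m,
          (d * ε⁻¹ * (∫⁻ y in P, T v m y * (E v m).indicator (fun _ => (1 : ℝ≥0∞)) y) +
            e v * volume (P ∩ dyadicCube n v m)) := by
        refine mul_le_mul_right (ENNReal.tsum_le_tsum fun v => ENNReal.tsum_le_tsum fun m => ?_) _
        exact hcube v m
    _ = (2 : ℝ≥0∞) ^ ((w : ℝ) * n) * (d * ε⁻¹ * (∑' v, ∑' m,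
          ∫⁻ y in P, T v m y * (E v m).indicator (fun _ => (1 : ℝ≥0∞)) y) +
            ∑' v, e v * ∑' m, volume (P ∩ dyadicCube n v m)) := by
        simp_rw [ENNReal.tsum_add, ENNReal.tsum_mul_left]
    _ ≤ (2 : ℝ≥0∞) ^ ((w : ℝ) * n) * (d * ε⁻¹ * volume P + ∑' v, e v * volume P) := by
        refine mul_le_mul_right (add_le_add (mul_le_mul_right hmain _)
          (ENNReal.tsum_le_tsum fun v => mul_le_mul_right (herr v) _)) _
    _ = (d * ε⁻¹ + ∑' v, e v) * ((2 : ℝ≥0∞) ^ ((w : ℝ) * n) * volume P) := by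
        rw [ENNReal.tsum_mul_right]; ring
    _ ≤ 1 := by
        rw [hP, volume_dyadicCube, ENNReal.mul_inv_cancel (hpos w) (htop w), mul_one]
        exact hde

/-- for `α ∈ C_loc^log`, `q ∈ 𝒫₀^log` with `0 < q⁻ ≤ q⁺ < ∞`, and a family of
measurable sets `E_{Q_{v,m}} ⊆ Q_{v,m}` with `|E_{Q_{v,m}}| > ε|Q_{v,m}|`, one has
`‖λ‖_{b̃^{α(·),q(·)}_{q(·),q(·)}} ≤ c ‖ (Σ_{v,m} 2^{v(α+n/2)q} |λ_{v,m}|^q χ_{E_{Q_{v,m}}})^{1/q} ‖_∞`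
with `c` independent of `λ` and of the sets. -/
theorem statement7 (n : ℕ) (hn : 1 ≤ n) (q α : Rn n → ℝ)
    (hqmeas : Measurable q) (hαmeas : Measurable α)
    (hα : ∃ c : ℝ, 0 < c ∧ LocLogHolderWith n c α)
    (hq0 : ∃ c : ℝ, 0 < c ∧ ∀ x, c ≤ q x)
    (hqlog : GlobLogHolder n fun x => 1 / q x)
    (qm qM : ℝ) (hqm : 0 < qm)
    (hq : ∀ᵐ x ∂(volume : Measure (Rn n)), qm ≤ q x ∧ q x ≤ qM)
    (ε : ℝ) (hε : 0 < ε) :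
    ∃ c : ℝ, 0 < c ∧
      ∀ (lam : ℕ → (Fin n → ℤ) → ℂ) (E : ℕ → (Fin n → ℤ) → Set (Rn n)),
        (∀ v m, MeasurableSet (E v m)) → (∀ v m, E v m ⊆ dyadicCube n v m) →
        (∀ v m, ENNReal.ofReal ε * volume (dyadicCube n v m) < volume (E v m)) →
        btNorm n q α lam ≤ ENNReal.ofReal c * eNormInf n q α lam E := by
  obtain ⟨cα, hcα, hα⟩ := hα
  obtain ⟨⟨cq, hcq, hqloc⟩, -⟩ := hqlog
  obtain ⟨c0, hc0, hq0⟩ := hq0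
  have hqpos : ∀ x, 0 < q x := fun x => hc0.trans_le (hq0 x)
  set κ : ℝ := (1 + Real.log n) / Real.log 2 with hκ
  set a : ℝ := cα * κ with ha
  set C : ℝ := qM ^ 2 * (cq * κ) with hC
  set ρ : ℝ := 2 ^ (-qm) with hρ
  have hρ0 : 0 < ρ := by positivity
  have hρ1 : ρ < 1 := Real.rpow_lt_one_of_one_lt_of_neg (by norm_num) (by linarith)
  set D : ℝ := 2 ^ C / ε + (1 - ρ)⁻¹ with hDdef
  have hS1 : 1 ≤ (1 - ρ)⁻¹ := (one_le_inv₀ (by linarith)).2 (by linarith)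
  have hD : 1 ≤ D := by
    have : 0 < 2 ^ C / ε := by positivity
    linarith
  have hD0 : 0 < D := by linarith
  set c : ℝ := 2 ^ a * D ^ (1 / qm) with hcdef
  have hc : 0 < c := by positivity
  clear_value c
  refine ⟨c, hc, fun lam E hEm hEs hEv => ?_⟩
  have hcE0 : ENNReal.ofReal c ≠ 0 := (ENNReal.ofReal_pos.2 hc).ne'
  rw [mul_comm, ← ENNReal.div_le_iff hcE0 ENNReal.ofReal_ne_top]
  refine le_of_forall_gt_imp_ge_of_dense fun M' hM' => ?_
  rcases eq_or_ne M' ∞ with rfl | hMtop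
  · exact le_top
  obtain ⟨M, hM, rfl⟩ : ∃ M : ℝ, 0 < M ∧ ENNReal.ofReal M = M' :=
    ⟨M'.toReal, ENNReal.toReal_pos (lt_of_le_of_lt zero_le hM').ne' hMtop,
      ENNReal.ofReal_toReal hMtop⟩
  rw [ENNReal.div_le_iff hcE0 ENNReal.ofReal_ne_top, mul_comm]
  have hM0 : ENNReal.ofReal M ≠ 0 := (ENNReal.ofReal_pos.2 hM).ne'
  -- The normalised sum over the sets `E v m` is at most `1` almost everywhere.
  have hsum : ∀ᵐ y ∂(volume : Measure (Rn n)), ∑' v, ∑' m,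
      ENNReal.ofReal (tau n q α M ‖lam v m‖ v y) *
        (E v m).indicator (fun _ => (1 : ℝ≥0∞)) y ≤ 1 := by
    filter_upwards [ae_lt_of_essSup_lt hM'] with y hy
    have hy' := ENNReal.rpow_le_rpow hy.le (hqpos y).le
    rw [← ENNReal.rpow_mul, one_div, inv_mul_cancel₀ (hqpos y).ne', ENNReal.rpow_one] at hy'
    simp_rw [term_eq_tau (α := α) hM (norm_nonneg (lam _ _)) _ y (hqpos y), mul_assoc,
      ENNReal.tsum_mul_left] at hy'
    have hp0 : ENNReal.ofReal M ^ q y ≠ 0 :=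
      (ENNReal.rpow_pos (ENNReal.ofReal_pos.2 hM) ENNReal.ofReal_ne_top).ne'
    have hpt : ENNReal.ofReal M ^ q y ≠ ∞ :=
      ENNReal.rpow_ne_top_of_nonneg (hqpos y).le ENNReal.ofReal_ne_top
    nth_rewrite 2 [← mul_one (ENNReal.ofReal M ^ q y)] at hy'
    exact (ENNReal.mul_le_mul_iff_right hp0 hpt).1 hy'
  have hcmp : ∀ᵐ x ∂(volume : Measure (Rn n)), ∀ᵐ y ∂(volume : Measure (Rn n)), ∀ v m,
      x ∈ dyadicCube n v m → y ∈ E v m →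
      ENNReal.ofReal (c ^ (-q x) * tau n q α M ‖lam v m‖ v x) ≤
        ENNReal.ofReal (D⁻¹ * 2 ^ C) * ENNReal.ofReal (tau n q α M ‖lam v m‖ v y) +
          ENNReal.ofReal (D⁻¹ * ρ ^ v) := by
    filter_upwards [hq] with x hx
    filter_upwards [hq, hsum] with y hy hys v m hxQ hyE
    have hyQ := hEs v m hyE
    have ht0 : 0 ≤ tau n q α M ‖lam v m‖ v y := by unfold tau; positivity
    have ht1 : tau n q α M ‖lam v m‖ v y ≤ 1 := by
      rw [← ENNReal.ofReal_le_one]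
      refine le_trans ?_ hys
      refine le_trans ?_ (ENNReal.le_tsum v)
      refine le_trans ?_ (ENNReal.le_tsum m)
      simp [hyE]
    rw [← ENNReal.ofReal_mul (by positivity), ← ENNReal.ofReal_add (by positivity) (by positivity)]
    refine ENNReal.ofReal_le_ofReal ?_
    have := tau_compare (n := n) (q := q) (α := α) hM (norm_nonneg (lam v m)) hqm hD hx.1 hy.1
      (mul_abs_sub_le hn hcα hα hxQ hyQ)
      (mul_abs_exponent_sub_le (hqpos x) (hqpos y) hx.2 hy.2
        (mul_abs_sub_le hn hcq hqloc hxQ hyQ)) ht1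
    rw [← hcdef] at this
    calc _ ≤ _ := this
      _ = _ := by ring
  have hde : ENNReal.ofReal (D⁻¹ * 2 ^ C) * (ENNReal.ofReal ε)⁻¹ +
      ∑' v : ℕ, ENNReal.ofReal (D⁻¹ * ρ ^ v) ≤ 1 := by
    rw [← ENNReal.ofReal_tsum_of_nonneg (fun v => by positivity)
      ((summable_geometric_of_lt_one hρ0.le hρ1).mul_left _), tsum_mul_left,
      tsum_geometric_of_lt_one hρ0.le hρ1, ← ENNReal.ofReal_inv_of_pos hε,
      ← ENNReal.ofReal_mul (by positivity),
      ← ENNReal.ofReal_add (by positivity) (by positivity), ENNReal.ofReal_le_one]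
    refine le_of_eq ?_
    calc _ = D⁻¹ * D := by rw [hDdef]; ring
      _ = 1 := inv_mul_cancel₀ hD0.ne'
  refine iSup_le fun w => iSup_le fun k => sInf_le ⟨?_, ?_⟩
  · exact ENNReal.mul_pos hcE0 hM0
  refine le_trans (le_of_eq ?_) (cube_estimate (ENNReal.ofReal_pos.2 hε).ne' ENNReal.ofReal_ne_top
    hEm hEs hEv (K := fun v m x => ENNReal.ofReal (c ^ (-q x) * tau n q α M ‖lam v m‖ v x))
    (fun v m => (measurable_tau hqmeas hαmeas M ‖lam v m‖ v).ennreal_ofReal) hsum hcmp hde w k)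
  rw [modularVE, ← lintegral_indicator (measurableSet_dyadicCube n w k)]
  refine lintegral_congr fun x => ?_
  have hqx := hqpos x
  by_cases hx : x ∈ dyadicCube n w k
  swap
  · simp [hx, hqx]
  rw [Set.indicator_of_mem hx, Set.indicator_of_mem hx, ENNReal.div_rpow_of_nonneg _ _ hqx.le,
    ← ENNReal.rpow_mul, one_div, inv_mul_cancel₀ hqx.ne', ENNReal.rpow_one,
    div_eq_mul_inv, mul_assoc]
  congr 1
  rw [← ENNReal.tsum_mul_right]
  refine tsum_congr fun v => ?_
  rw [← ENNReal.tsum_mul_right]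
  refine tsum_congr fun m => ?_
  rw [mul_assoc (ite _ _ _), term_eq_tau hM (norm_nonneg (lam v m)) v x hqx,
    ENNReal.ofReal_mul (p := c ^ (-q x)) (by positivity), Real.rpow_neg hc.le,
    ENNReal.ofReal_inv_of_pos (by positivity), ← ENNReal.ofReal_rpow_of_pos hc,
    ENNReal.mul_rpow_of_nonneg _ _ hqx.le]
  have hp0 : ENNReal.ofReal M ^ q x ≠ 0 :=
    (ENNReal.rpow_pos (ENNReal.ofReal_pos.2 hM) ENNReal.ofReal_ne_top).ne'
  have hpt : ENNReal.ofReal M ^ q x ≠ ∞ :=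
    ENNReal.rpow_ne_top_of_nonneg hqx.le ENNReal.ofReal_ne_top
  rw [ENNReal.mul_inv (Or.inr hpt) (Or.inr hp0)]
  calc _ = (if w ≤ v then (1 : ℝ≥0∞) else 0) * ((ENNReal.ofReal c ^ q x)⁻¹ *
        ENNReal.ofReal (tau n q α M ‖lam v m‖ v x)) *
        (dyadicCube n v m).indicator (fun _ => (1 : ℝ≥0∞)) x *
        (ENNReal.ofReal M ^ q x * (ENNReal.ofReal M ^ q x)⁻¹) := by ring
    _ = _ := by rw [ENNReal.mul_inv_cancel hp0 hpt, mul_one]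

end
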